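/- arXiv:2211.08181 — 2 statements merged into one kernel-verified Lean document; each statement's English description precedes it below -/
import Mathlib

section
/- Every End-of-Line instance has a solution. Precisely: let α be a finite type with a distinguished element o, and let S, P : α → α be functions satisfying P o = o and S o ≠ o. Then there exists a vertex v : α such that P (S v) ≠ v, or both S (P v) ≠ v and v ≠ o. -/
/-- Every End-of-Line instance has a solution. -/
theorem end_of_line_total {α : Type*} [Finite α] (o : α) (S P : α → α)
    (hP : P o = o) (hS : S o ≠ o) :
    ∃ v : α, P (S v) ≠ v ∨ (S (P v) ≠ v ∧ v ≠ o) := by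
  -- Without a solution, `S` is injective, hence surjective by finiteness. A preimage of `o`
  -- must be `P o = o`, contradicting `S o ≠ o`.
  by_contra! h
  have hinv : Function.LeftInverse P S := fun v => (h v).1
  obtain ⟨w, hw⟩ := Finite.surjective_of_injective hinv.injective o
  have hwo : w = o := by rw [← hinv w, hw, hP]
  exact hS (hwo ▸ hw)
end

section
/- Every End-of-Metered-Line instance has a solution. Precisely: let α be a finite type with a distinguished element o, let S, P : α → α and M : α → ℕ satisfy P o = o, S o ≠ o, and M o = 1. Then there exists a vertex v : α satisfying at least one of: (i) P (S v) ≠ v, or S (P v) ≠ v and v ≠ o; (ii) v ≠ o and M v = 1; (iii) M v > 0 and M (S v) - M v ≠ 1, or M v > 1 and M v - M (P v) ≠ 1. -/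
/-- Every End-of-Metered-Line instance has a solution. -/
theorem end_of_metered_line_total {α : Type*} [Finite α] (o : α) (S P : α → α)
    (M : α → ℕ) (hP : P o = o) (hS : S o ≠ o) (hM : M o = 1) :
    ∃ v : α,
      (P (S v) ≠ v ∨ (S (P v) ≠ v ∧ v ≠ o)) ∨
      (v ≠ o ∧ M v = 1) ∨
      ((M v > 0 ∧ M (S v) - M v ≠ 1) ∨ (M v > 1 ∧ M v - M (P v) ≠ 1)) := by
  -- A vertex maximizing the odometer is a miscount: its value is at least `M o = 1`,
  -- and its successor cannot have a larger one.
  haveI : Nonempty α := ⟨o⟩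
  obtain ⟨v, hv⟩ := Finite.exists_max M
  have h_source := hv o
  have h_succ := hv (S v)
  exact ⟨v, Or.inr (Or.inr (Or.inl ⟨by omega, by omega⟩))⟩
end
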